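/- arXiv:1302.0442 — 3 statements merged into one kernel-verified Lean document; each statement's English description precedes it below -/
import Mathlib

section
/- Let Q⁰ and Q¹ be two elements of 𝒬_f with density processes Z⁰ and Z¹. Then sup_{0 ≤ t ≤ T} E_P[ ( f'(Z⁰_t)(Z¹_t − Z⁰_t) )⁺ ] ≤ d(Q¹|P) + κ, where x⁺ denotes the positive part and, on the set {Z⁰_t = 0}, f'(0) denotes lim_{x→0⁺} f'(x) ∈ [−∞,∞) with the conventions (−∞)·y = −∞ for y > 0 and (−∞)·0 = 0. -/
/-!
By convexity `f'(z₀)(z₁ - z₀) ≤ f(z₁) - f(z₀) ≤ f(z₁) + κ` for `z₀ > 0`, and letting `z₀ ↓ 0` gives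
`f'(0) z₁ ≤ f(z₁) + κ` as well, with no distinction between `f'(0)` finite and `f'(0) = -∞`. As
`f + κ ≥ 0` on `[0, ∞)`, the positive part obeys the same bound (`posPart_derivTerm_le`). Since `Z¹`
is the `P`-martingale closed by `Z¹_T`, conditional Jensen gives `f(Z¹_t) ≤ E[f(Z¹_T) | ℱ_t]`
(`comp_densProc_le_condExp`), and taking expectations finishes the proof.
-/

open MeasureTheory Filter Set
open scoped ENNReal NNReal Topology

noncomputable section

namespace RobustUtility

variable {Ω : Type*} {m0 : MeasurableSpace Ω}

/-- Convex conjugate `f*(x) = sup_{y > 0} (x * y - f y)`. -/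
def fconj (f : ℝ → ℝ) (x : ℝ) : ℝ :=
  ⨆ y : Set.Ioi (0 : ℝ), (x * (y : ℝ) - f (y : ℝ))

/-- The density `dQ/dP` on the σ-algebra `ℱ T`. -/
def densityT (ℱ : Filtration ℝ m0) (T : ℝ) (P Q : Measure Ω) (ω : Ω) : ℝ :=
  ((Q.trim (ℱ.le T)).rnDeriv (P.trim (ℱ.le T)) ω).toReal

/-- The density process `Z^Q_t = E_P[ dQ/dP |_{ℱ T} | ℱ t ]`. -/
def densProc (ℱ : Filtration ℝ m0) (T : ℝ) (P Q : Measure Ω) (t : ℝ) : Ω → ℝ :=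
  P[densityT ℱ T P Q | ℱ t]

/-- The `f`-divergence `d(Q|P) = E_P[f (Z^Q_T)]`. -/
def fDivg (f : ℝ → ℝ) (ℱ : Filtration ℝ m0) (T : ℝ) (P Q : Measure Ω) : ℝ :=
  ∫ ω, f (densProc ℱ T P Q T ω) ∂P

/-- The class `𝒬_f` : probability measures `Q ≪ P` on `ℱ T`, with `Q = P` on `ℱ 0`
and finite `f`-divergence. -/
def QfSet (f : ℝ → ℝ) (ℱ : Filtration ℝ m0) (T : ℝ) (P : Measure Ω) : Set (Measure Ω) :=
  {Q | IsProbabilityMeasure Q ∧ Q.trim (ℱ.le T) ≪ P.trim (ℱ.le T) ∧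
       (∀ A : Set Ω, MeasurableSet[ℱ 0] A → Q A = P A) ∧
       Integrable (fun ω => f (densProc ℱ T P Q T ω)) P}

/-- The discount factor `S^δ_t = exp (-∫_0^t δ_s ds)`. -/
def disc (δ : ℝ → Ω → ℝ) (t : ℝ) (ω : Ω) : ℝ :=
  Real.exp (-∫ s in (0:ℝ)..t, δ s ω)

/-- The discounted utility `𝒰^δ_{0,T} = α ∫_0^T S^δ_s U_s ds + ᾱ S^δ_T Ū_T`. -/
def utility (δ U : ℝ → Ω → ℝ) (Ubar : Ω → ℝ) (α αb T : ℝ) (ω : Ω) : ℝ :=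
  α * (∫ s in (0:ℝ)..T, disc δ s ω * U s ω) + αb * disc δ T ω * Ubar ω

/-- The penalty term `ℛ^δ_{0,T}(Q)`. -/
def penalty (f : ℝ → ℝ) (ℱ : Filtration ℝ m0) (T : ℝ) (P Q : Measure Ω)
    (δ : ℝ → Ω → ℝ) (ω : Ω) : ℝ :=
  (∫ s in (0:ℝ)..T, δ s ω * disc δ s ω * (f (densProc ℱ T P Q s ω) / densProc ℱ T P Q s ω))
    + disc δ T ω * (f (densProc ℱ T P Q T ω) / densProc ℱ T P Q T ω)

/-- The cost functional `c(·,Q) = 𝒰^δ_{0,T} + β ℛ^δ_{0,T}(Q)`. -/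
def cost (f : ℝ → ℝ) (ℱ : Filtration ℝ m0) (T : ℝ) (P Q : Measure Ω)
    (δ U : ℝ → Ω → ℝ) (Ubar : Ω → ℝ) (α αb β : ℝ) (ω : Ω) : ℝ :=
  utility δ U Ubar α αb T ω + β * penalty f ℱ T P Q δ ω

/-- `Γ(Q) = E_Q[c(·,Q)]`. -/
def Gamma (f : ℝ → ℝ) (ℱ : Filtration ℝ m0) (T : ℝ) (P Q : Measure Ω)
    (δ U : ℝ → Ω → ℝ) (Ubar : Ω → ℝ) (α αb β : ℝ) : ℝ :=
  ∫ ω, cost f ℱ T P Q δ U Ubar α αb β ω ∂Q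


/-- `f'(z0) * (z1 - z0)` with the extended-real convention for `f'(0) = lim_{x→0⁺} f'(x)`:
if `z0 > 0` this is the real number `f' z0 * (z1 - z0)`; otherwise it is `f'0 * (z1 - z0)`
computed in `EReal`, so that `(-∞) * y = -∞` for `y > 0` and `(-∞) * 0 = 0`. -/
def derivTerm (f' : ℝ → ℝ) (f'0 : EReal) (z0 z1 : ℝ) : EReal :=
  if 0 < z0 then ((f' z0 * (z1 - z0) : ℝ) : EReal)
  else f'0 * ((z1 - z0 : ℝ) : EReal)

/-- The lower bound `-κ` on `(0, ∞)` persists at `0` by continuity. -/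
lemma neg_le_of_nonneg {f : ℝ → ℝ} {κ : ℝ} (hf_cont : ContinuousOn f (Set.Ici 0))
    (hf_lb : ∀ x : ℝ, 0 < x → -κ ≤ f x) {x : ℝ} (hx : 0 ≤ x) : -κ ≤ f x := by
  rcases hx.lt_or_eq with h | rfl
  · exact hf_lb x h
  · have h1 : Tendsto f (𝓝[>] (0 : ℝ)) (𝓝 (f 0)) :=
      (hf_cont 0 self_mem_Ici).mono_left (nhdsWithin_mono _ Ioi_subset_Ici_self)
    exact ge_of_tendsto h1 (eventually_mem_nhdsWithin.mono fun y hy => hf_lb y hy)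

/-- The tangent-line inequality with `f z0` replaced by its lower bound `-κ`; at the boundary point
the slope is `f'(0) ∈ [-∞, ∞)`. -/
lemma derivTerm_le {f f' : ℝ → ℝ} {κ : ℝ} {f'0 : EReal}
    (hf_cont : ContinuousOn f (Set.Ici 0)) (hf_conv : ConvexOn ℝ (Set.Ici 0) f)
    (hf_lb : ∀ x : ℝ, 0 < x → -κ ≤ f x)
    (hf' : ∀ x : ℝ, 0 < x → HasDerivAt f (f' x) x)
    (hf'0 : Tendsto (fun x : ℝ => (f' x : EReal)) (𝓝[>] (0:ℝ)) (𝓝 f'0))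
    {z0 z1 : ℝ} (h0 : 0 ≤ z0) (h1 : 0 ≤ z1) :
    derivTerm f' f'0 z0 z1 ≤ ((f z1 + κ : ℝ) : EReal) := by
  have hb1 := neg_le_of_nonneg hf_cont hf_lb h1
  rcases h0.lt_or_eq with h | rfl
  · rw [derivTerm, if_pos h, EReal.coe_le_coe_iff]
    have hb0 := hf_lb z0 h
    rcases lt_trichotomy z0 z1 with hlt | rfl | hgt
    · have := hf_conv.le_slope_of_hasDerivAt h0 h1 hlt (hf' z0 h)
      rw [slope_def_field, le_div_iff₀ (by linarith)] at this
      linarith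
    · simp only [sub_self, mul_zero]; linarith
    · have := hf_conv.slope_le_of_hasDerivAt h1 h0 hgt (hf' z0 h)
      rw [slope_def_field, div_le_iff₀ (by linarith)] at this
      nlinarith
  · rw [derivTerm, if_neg (lt_irrefl _), sub_zero]
    rcases h1.lt_or_eq with h | rfl
    · -- The secant bound `f' x ≤ (f z1 + κ) / (z1 - x)` passes to the limit `x ↓ 0` in `EReal`.
      have hle : f'0 ≤ (((f z1 + κ) / z1 : ℝ) : EReal) := by
        have hc : Tendsto (fun x : ℝ => (((f z1 + κ) / (z1 - x) : ℝ) : EReal)) (𝓝[>] (0:ℝ))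
            (𝓝 (((f z1 + κ) / z1 : ℝ) : EReal)) := by
          refine (continuous_coe_real_ereal.tendsto _).comp ?_
          have : ContinuousAt (fun x : ℝ => (f z1 + κ) / (z1 - x)) 0 :=
            continuousAt_const.div (by fun_prop) (by simpa using h.ne')
          simpa using this.tendsto.mono_left (nhdsWithin_le_nhds (s := Ioi (0 : ℝ)))
        refine le_of_tendsto_of_tendsto hf'0 hc ?_
        filter_upwards [Ioo_mem_nhdsGT h] with x hx
        rw [EReal.coe_le_coe_iff]
        have := hf_conv.le_slope_of_hasDerivAt hx.1.le h1 hx.2 (hf' x hx.1)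
        refine this.trans ?_
        rw [slope_def_field]
        have := hf_lb x hx.1
        exact div_le_div_of_nonneg_right (by linarith) (by linarith [hx.2])
      calc f'0 * (z1 : EReal) ≤ (((f z1 + κ) / z1 : ℝ) : EReal) * (z1 : EReal) :=
            mul_le_mul_of_nonneg_right hle (by exact_mod_cast h1)
        _ = ((f z1 + κ : ℝ) : EReal) := by
            rw [← EReal.coe_mul, div_mul_cancel₀ _ h.ne']
    · rw [EReal.coe_zero, mul_zero]
      exact_mod_cast (by linarith : 0 ≤ f 0 + κ)

lemma posPart_derivTerm_le {f f' : ℝ → ℝ} {κ : ℝ} {f'0 : EReal}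
    (hf_cont : ContinuousOn f (Set.Ici 0)) (hf_conv : ConvexOn ℝ (Set.Ici 0) f)
    (hf_lb : ∀ x : ℝ, 0 < x → -κ ≤ f x)
    (hf' : ∀ x : ℝ, 0 < x → HasDerivAt f (f' x) x)
    (hf'0 : Tendsto (fun x : ℝ => (f' x : EReal)) (𝓝[>] (0:ℝ)) (𝓝 f'0))
    {z0 z1 : ℝ} (h0 : 0 ≤ z0) (h1 : 0 ≤ z1) :
    (derivTerm f' f'0 z0 z1 ⊔ 0).toReal ≤ f z1 + κ := by
  have hb1 := neg_le_of_nonneg hf_cont hf_lb h1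
  have h : derivTerm f' f'0 z0 z1 ⊔ 0 ≤ ((f z1 + κ : ℝ) : EReal) :=
    sup_le (derivTerm_le hf_cont hf_conv hf_lb hf' hf'0 h0 h1)
      (by exact_mod_cast (by linarith : 0 ≤ f z1 + κ))
  have h' := EReal.toReal_le_toReal h
    (ne_of_gt ((EReal.bot_lt_zero).trans_le le_sup_right)) (EReal.coe_ne_top _)
  rwa [EReal.toReal_coe] at h'

lemma densProc_nonneg {Ω : Type*} {m0 : MeasurableSpace Ω} (P Q : Measure Ω)
    (ℱ : Filtration ℝ m0) (T t : ℝ) : ∀ᵐ ω ∂P, 0 ≤ densProc ℱ T P Q t ω :=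
  condExp_nonneg (Eventually.of_forall fun _ => ENNReal.toReal_nonneg)

/-- Conditional Jensen for the density martingale, on the closed half-line where `f` is convex. -/
lemma comp_densProc_le_condExp {Ω : Type*} {m0 : MeasurableSpace Ω} (P Q : Measure Ω)
    [IsFiniteMeasure P] (ℱ : Filtration ℝ m0) {T t : ℝ} (ht : t ≤ T) {f : ℝ → ℝ}
    (hf_cont : ContinuousOn f (Set.Ici 0)) (hf_conv : ConvexOn ℝ (Set.Ici 0) f)
    (hint : Integrable (fun ω => f (densProc ℱ T P Q T ω)) P) :
    ∀ᵐ ω ∂P, f (densProc ℱ T P Q t ω) ≤ P[fun ω => f (densProc ℱ T P Q T ω) | ℱ t] ω := by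
  have htower : P[densProc ℱ T P Q T | ℱ t] =ᵐ[P] densProc ℱ T P Q t :=
    condExp_condExp_of_le (ℱ.mono ht) (ℱ.le T)
  have hJ := hf_conv.map_condExp_le (ℱ.le t) hf_cont.lowerSemicontinuousOn
    (densProc_nonneg P Q ℱ T T) isClosed_Ici integrable_condExp hint
  filter_upwards [htower, hJ] with ω h1 h2
  rw [← h1]
  exact h2

theorem statement_6
    {Ω : Type*} {m0 : MeasurableSpace Ω}
    (P : Measure Ω) [IsProbabilityMeasure P]
    (ℱ : Filtration ℝ m0) (T : ℝ) (hT : 0 < T)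
    (f : ℝ → ℝ) (κ : ℝ) (hκ : 0 ≤ κ)
    (hf_cont : ContinuousOn f (Set.Ici 0))
    (hf_conv : StrictConvexOn ℝ (Set.Ici 0) f)
    (hf_one : f 1 = 0)
    (hf_lb : ∀ x : ℝ, 0 < x → -κ ≤ f x)
    (hf_coer : Tendsto (fun x => f x / x) atTop atTop)
    (f' : ℝ → ℝ) (hf' : ∀ x : ℝ, 0 < x → HasDerivAt f (f' x) x)
    (f'0 : EReal) (hf'0 : Tendsto (fun x : ℝ => (f' x : EReal)) (𝓝[>] (0:ℝ)) (𝓝 f'0))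
    (hf'0_ne_top : f'0 ≠ ⊤)
    (Q0 Q1 : Measure Ω) (hQ0 : Q0 ∈ QfSet f ℱ T P) (hQ1 : Q1 ∈ QfSet f ℱ T P) :
    ∀ t ∈ Set.Icc (0:ℝ) T,
      (∫ ω, ((derivTerm f' f'0 (densProc ℱ T P Q0 t ω) (densProc ℱ T P Q1 t ω)) ⊔ 0).toReal ∂P)
        ≤ fDivg f ℱ T P Q1 + κ := by
  intro t ht
  have hint : Integrable (fun ω => f (densProc ℱ T P Q1 T ω)) P := hQ1.2.2.2
  -- The dominating variable is chosen as a conditional expectation because its integrability is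
  -- known, whereas the positive part need not be shown measurable.
  calc (∫ ω, ((derivTerm f' f'0 (densProc ℱ T P Q0 t ω) (densProc ℱ T P Q1 t ω)) ⊔ 0).toReal ∂P)
      ≤ ∫ ω, (P[fun ω => f (densProc ℱ T P Q1 T ω) | ℱ t] ω + κ) ∂P := by
        refine integral_mono_of_nonneg
          (Eventually.of_forall fun ω => EReal.toReal_nonneg le_sup_right)
          (integrable_condExp.add (integrable_const κ)) ?_
        filter_upwards [densProc_nonneg P Q0 ℱ T t, densProc_nonneg P Q1 ℱ T t,
          comp_densProc_le_condExp P Q1 ℱ ht.2 hf_cont hf_conv.convexOn hint] with ω h0 h1 hJ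
        exact (posPart_derivTerm_le hf_cont hf_conv.convexOn hf_lb hf' hf'0 h0 h1).trans
          (add_le_add_left hJ κ)
    _ = fDivg f ℱ T P Q1 + κ := by
        rw [integral_add integrable_condExp (integrable_const κ), integral_condExp (ℱ.le t)]
        simp [fDivg]

end RobustUtility
end
end

section
/- Let f : ℝ → ℝ be a convex, increasing, differentiable function such that |f(x)| ≤ A₁ + B₁x² for all x ∈ ℝ, for some constants A₁, B₁ ≥ 0. Then there exist constants A₂, B₂ ≥ 0 (one may take A₂ = 2A₁ + f'(1) and B₂ = 5B₁) such that 0 ≤ f'(x) ≤ A₂ + B₂|x| for all x ∈ ℝ. -/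
/-! The derivative of a convex function is nondecreasing, so `f' x ≤ f' 1` for `x ≤ 1`. For
`x ≥ 1` it is at most the slope of the secant over `[x, 2x]`, hence
`x * f' x ≤ f (2x) - f x ≤ 2 A₁ + 5 B₁ x²`; dividing by `x ≥ 1` gives the linear bound. -/

theorem statement_12
    (f : ℝ → ℝ) (A₁ B₁ : ℝ) (hA₁ : 0 ≤ A₁) (hB₁ : 0 ≤ B₁)
    (hconv : ConvexOn ℝ Set.univ f) (hmono : Monotone f)
    (hdiff : Differentiable ℝ f)
    (hbound : ∀ x : ℝ, |f x| ≤ A₁ + B₁ * x ^ 2) :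
    ∃ A₂ B₂ : ℝ, 0 ≤ A₂ ∧ 0 ≤ B₂ ∧
      A₂ = 2 * A₁ + deriv f 1 ∧ B₂ = 5 * B₁ ∧
      ∀ x : ℝ, 0 ≤ deriv f x ∧ deriv f x ≤ A₂ + B₂ * |x| := by
  have hpos : ∀ x, 0 ≤ deriv f x := fun x => hmono.deriv_nonneg
  have h1 := hpos 1
  refine ⟨_, _, by positivity, by positivity, rfl, rfl, fun x => ⟨hpos x, ?_⟩⟩
  rcases le_total x 1 with hx | hx
  · have h := hconv.monotoneOn_deriv (fun y _ => hdiff y) (Set.mem_univ x) (Set.mem_univ 1) hx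
    have : 0 ≤ 5 * B₁ * |x| := by positivity
    linarith
  · have hx0 : 0 < x := by linarith
    rw [abs_of_pos hx0]
    -- Convexity puts the tangent slope at `x` below the secant slope over `[x, 2x]`,
    -- an interval whose length `x` absorbs one power of the quadratic bound.
    have h := hconv.deriv_le_slope (Set.mem_univ x) (Set.mem_univ (2 * x)) (by linarith) (hdiff x)
    rw [slope_def_field, le_div_iff₀ (by linarith)] at h
    have ha := (abs_le.1 (hbound x)).1
    have hb := (abs_le.1 (hbound (2 * x))).2
    have hd : deriv f x * x ≤ (2 * A₁ + 5 * B₁ * x) * x := by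
      nlinarith [mul_nonneg hA₁ (sub_nonneg.2 hx)]
    linarith [le_of_mul_le_mul_right hd hx0]
end

section
/- Let P be a probability measure on a measurable space (Ω, 𝓕), let 𝒞 be a convex set of probability measures on (Ω, 𝓕), each absolutely continuous with respect to P, with P ∈ 𝒞, and let Γ : 𝒞 → ℝ be a convex function that attains its infimum at some Q* ∈ 𝒞. Then inf_{Q ∈ 𝒞} Γ(Q) = inf { Γ(Q) : Q ∈ 𝒞, Q equivalent to P }. In particular, for every Q ≪ P and every λ ∈ [0,1), the measure λQ + (1−λ)P is equivalent to P. -/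
/-! Mixing any `Q ≪ P` with a positive weight of `P` gives a measure equivalent to `P`, since a
null set of the mixture is `P`-null. Along the segment from `P` to the minimizer `Qstar`, convexity
bounds `Γ` by `l * Γ Qstar + (1 - l) * Γ P`, which tends to `Γ Qstar` as `l ↑ 1`; hence `Γ Qstar` is
the greatest lower bound of both image sets. -/

open MeasureTheory
open scoped ENNReal

theorem mix_equiv {Ω : Type*} [MeasurableSpace Ω] {P Q : Measure Ω} (hQ : Q ≪ P) {l : ℝ}
    (hl : l < 1) :
    (ENNReal.ofReal l • Q + ENNReal.ofReal (1 - l) • P) ≪ P ∧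
      P ≪ (ENNReal.ofReal l • Q + ENNReal.ofReal (1 - l) • P) := by
  have hne : ENNReal.ofReal (1 - l) ≠ 0 := (ENNReal.ofReal_pos.2 (by linarith)).ne'
  refine ⟨Measure.AbsolutelyContinuous.mk fun s _ hs => by simp [hs, hQ hs],
    Measure.AbsolutelyContinuous.mk fun s _ hs => ?_⟩
  rw [Measure.add_apply, add_eq_zero, Measure.smul_apply, Measure.smul_apply, smul_eq_mul,
    smul_eq_mul, mul_eq_zero, mul_eq_zero] at hs
  exact hs.2.resolve_left hne

theorem statement_16
    {Ω : Type*} [MeasurableSpace Ω]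
    (P : Measure Ω) [IsProbabilityMeasure P]
    (𝒞 : Set (Measure Ω))
    (hprob : ∀ Q ∈ 𝒞, IsProbabilityMeasure Q)
    (hac : ∀ Q ∈ 𝒞, Q ≪ P)
    (hPmem : P ∈ 𝒞)
    (hconvSet : ∀ Q ∈ 𝒞, ∀ Q' ∈ 𝒞, ∀ a b : ℝ, 0 ≤ a → 0 ≤ b → a + b = 1 →
      ENNReal.ofReal a • Q + ENNReal.ofReal b • Q' ∈ 𝒞)
    (Γ : Measure Ω → ℝ)
    (hΓconv : ∀ Q ∈ 𝒞, ∀ Q' ∈ 𝒞, ∀ a b : ℝ, 0 ≤ a → 0 ≤ b → a + b = 1 →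
      Γ (ENNReal.ofReal a • Q + ENNReal.ofReal b • Q') ≤ a * Γ Q + b * Γ Q')
    (Qstar : Measure Ω) (hQstar : Qstar ∈ 𝒞) (hmin : ∀ Q ∈ 𝒞, Γ Qstar ≤ Γ Q) :
    sInf (Γ '' 𝒞) = sInf (Γ '' {Q ∈ 𝒞 | Q ≪ P ∧ P ≪ Q}) ∧
    ∀ Q : Measure Ω, Q ≪ P → ∀ l : ℝ, l ∈ Set.Ico (0:ℝ) 1 →
      (ENNReal.ofReal l • Q + ENNReal.ofReal (1 - l) • P) ≪ P ∧
      P ≪ (ENNReal.ofReal l • Q + ENNReal.ofReal (1 - l) • P) := by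
  refine ⟨?_, fun Q hQ l hl => mix_equiv hQ hl.2⟩
  have h1 : IsLeast (Γ '' 𝒞) (Γ Qstar) :=
    ⟨⟨Qstar, hQstar, rfl⟩, by rintro _ ⟨Q, hQ, rfl⟩; exact hmin Q hQ⟩
  have h2 : IsGLB (Γ '' {Q ∈ 𝒞 | Q ≪ P ∧ P ≪ Q}) (Γ Qstar) := by
    refine ⟨by rintro _ ⟨Q, hQ, rfl⟩; exact hmin Q hQ.1, fun c hc => ?_⟩
    have hlim : Filter.Tendsto (fun l : ℝ => l * Γ Qstar + (1 - l) * Γ P)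
        (nhdsWithin 1 (Set.Iio 1)) (nhds (Γ Qstar)) := by
      have hcont : Continuous fun l : ℝ => l * Γ Qstar + (1 - l) * Γ P := by fun_prop
      simpa using (hcont.tendsto 1).mono_left nhdsWithin_le_nhds
    refine ge_of_tendsto hlim ?_
    filter_upwards [Ioo_mem_nhdsLT (zero_lt_one' ℝ)] with l hl
    have hl' : 0 ≤ 1 - l := by linarith [hl.2]
    exact (hc ⟨_, ⟨hconvSet Qstar hQstar P hPmem l (1 - l) hl.1.le hl' (by ring),
      mix_equiv (hac _ hQstar) hl.2⟩, rfl⟩).trans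
      (hΓconv Qstar hQstar P hPmem l (1 - l) hl.1.le hl' (by ring))
  rw [h1.csInf_eq, h2.csInf_eq ⟨_, P, ⟨hPmem, .rfl, .rfl⟩, rfl⟩]
end
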